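/- Let H : Ω → S(m) be continuously differentiable, with repeated eigenvalues λ_1(x) ≤ … ≤ λ_m(x) and eigenprojections P_1(x), …, P_m(x). Fix j ∈ {1,…,m} and assume that the map x ↦ P_j(x) is continuous on Ω. Then P_j is differentiable in Ω and its directional derivatives are given by D_e P_j(x) = P_j(x) · D_e H(x) · A_j(x) + A_j(x) · D_e H(x) · P_j(x) for every x ∈ Ω and every direction e ∈ ℝⁿ; moreover, for every q ∈ ℝ^m the Jacobian matrix of x ↦ P_j(x)q equals ∇_q P_j(x) = P_j(x)·∇_{A_j(x)q} H(x) + A_j(x)·∇_{P_j(x)q} H(x), where ∇_p H(x) denotes the Jacobian matrix of x ↦ H(x)p. -/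

import Mathlib

open scoped Classical

/-- Entrywise directional derivative `D_e H(x)` of a matrix-valued map. -/
noncomputable def DH {E : Type*} [NormedAddCommGroup E] [NormedSpace ℝ E] {m : ℕ}
    (H : E → Matrix (Fin m) (Fin m) ℝ) (x e : E) : Matrix (Fin m) (Fin m) ℝ :=
  Matrix.of fun i k => fderiv ℝ (fun y => H y i k) x e

/-- The pseudoinverse `A_j(x)` of `λ_j(x)I - H(x)`. -/
noncomputable def Amat {E : Type*} {m : ℕ} (lam : Fin m → E → ℝ)
    (P : Fin m → E → Matrix (Fin m) (Fin m) ℝ) (j : Fin m) (x : E) :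
    Matrix (Fin m) (Fin m) ℝ :=
  ∑ i ∈ Finset.univ.filter (fun i => lam i x ≠ lam j x),
    (((Finset.univ.filter fun k => lam k x = lam i x).card : ℝ) * (lam j x - lam i x))⁻¹ • P i x

/-!
Write `p = P x`, `q = P y`, and let `A` be the reduced resolvent of `λ x - H x`. Since
`A (λ x - H x) = 1 - p` and `H y q = λ y q`,
`(1 - p) q = A (H y - H x) q - (λ y - λ x) A q`.
Compressing `H y - H x` between `p` and `q` gives `λ y - λ x = O(y - x)`, and `A q → A p = 0`, so
the last term is `o(y - x)` and `(1 - p) q` has derivative `A H' p`. Symmetrically, `q (1 - p)` has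
derivative `p H' A`. For idempotents the remaining corner `p (q - p) p = -p (q - p)² p` is quadratic
in `q - p`, hence does not contribute to the derivative.
-/

open Filter Asymptotics
open scoped Topology

section Idempotents

variable {R : Type*} [Ring R] {p q : R}

theorem compl_mul_add_mul_mul_compl_sub_sub (hp : IsIdempotentElem p) (hq : IsIdempotentElem q) :
    (1 - p) * q + p * (q * (1 - p)) - (q - p) = p * ((q - p) * (q - p)) * p := by
  have hpp (z : R) : p * (p * z) = p * z := by rw [← mul_assoc, hp.eq]
  have hsq : (q - p) * (q - p) = q - q * p - p * q + p := by
    rw [sub_mul, mul_sub, mul_sub, hp.eq, hq.eq]; abel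
  rw [hsq]
  simp only [mul_sub, sub_mul, mul_add, add_mul, mul_one, one_mul, mul_assoc, hp.eq, hpp]
  abel

/-- `A` inverts `T` on the range of `1 - p` and vanishes on the range of `p`; for the projection `p`
onto the kernel of a symmetric matrix `T`, this is the Moore–Penrose pseudoinverse of `T`. It is
what enters the derivative of an eigenprojection, with `T = λ - H`. -/
structure IsReducedResolvent (A T p : R) : Prop where
  mul_operator : A * T = 1 - p
  operator_mul : T * A = 1 - p
  mul_proj : A * p = 0
  proj_mul : p * A = 0

end Idempotents

section Derivatives

variable {𝕜 E F R : Type*} [NontriviallyNormedField 𝕜]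
  [NormedAddCommGroup E] [NormedSpace 𝕜 E] [NormedAddCommGroup F] [NormedSpace 𝕜 F]
  [NormedRing R] [NormedAlgebra 𝕜 R] {x : E}

theorem hasFDerivAt_of_sub_isLittleO {f g : E → F} {g' : E →L[𝕜] F} (hg : HasFDerivAt g g' x)
    (h : (fun y => (g y - g x) - (f y - f x)) =o[𝓝 x] fun y => y - x) :
    HasFDerivAt f g' x := by
  refine .of_isLittleO <| (hg.isLittleO.sub h).congr_left fun y => ?_
  abel

theorem hasFDerivAt_of_sub_isLittleO_self {f g : E → F} {g' : E →L[𝕜] F} (hg : HasFDerivAt g g' x)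
    (h : (fun y => (g y - g x) - (f y - f x)) =o[𝓝 x] fun y => f y - f x) :
    HasFDerivAt f g' x := by
  have hfg : (fun y => f y - f x) =O[𝓝 x] fun y => g y - g x :=
    h.right_isBigO_add.congr_right fun y => sub_add_cancel _ _
  exact hasFDerivAt_of_sub_isLittleO hg (h.trans_isBigO (hfg.trans hg.isBigO_sub))

theorem hasFDerivAt_of_isIdempotentElem {P : E → R} {U V : E →L[𝕜] R} (hP : ContinuousAt P x)
    (hidem : ∀ᶠ y in 𝓝 x, IsIdempotentElem (P y))
    (hU : HasFDerivAt (fun y => (1 - P x) * P y) U x)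
    (hV : HasFDerivAt (fun y => P y * (1 - P x)) V x) :
    HasFDerivAt P (U + (ContinuousLinearMap.mul 𝕜 R (P x)).comp V) x := by
  have hx : IsIdempotentElem (P x) := hidem.self_of_nhds
  refine hasFDerivAt_of_sub_isLittleO_self
    (hU.add ((ContinuousLinearMap.mul 𝕜 R (P x)).hasFDerivAt.comp x hV)) ?_
  have hcont : (fun y => P y - P x) =o[𝓝 x] fun _ => (1 : ℝ) :=
    (isLittleO_one_iff ℝ).2 (tendsto_sub_nhds_zero_iff.2 hP)
  have hquad : (fun y => P x * ((P y - P x) * (P y - P x)) * P x) =o[𝓝 x] fun y => P y - P x := by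
    have hsq : (fun y => (P y - P x) * (P y - P x)) =o[𝓝 x] fun y => P y - P x := by
      simpa using (hcont.mul_isBigO (isBigO_refl (fun y => P y - P x) _).norm_right).norm_right
    exact ((ContinuousLinearMap.mulLeftRight 𝕜 R (P x) (P x)).isBigO_comp _ _).trans_isLittleO hsq
  refine hquad.congr' (hidem.mono fun y hy => ?_) .rfl
  simp [← compl_mul_add_mul_mul_compl_sub_sub hx hy, hx.mul_one_sub_self, hx.one_sub_mul_self]

theorem eigenvalue_sub_isBigO {X : Type*} [TopologicalSpace X] {x : X} {H P : X → R} {lam : X → 𝕜}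
    (hP : ContinuousAt P x) (hidem : IsIdempotentElem (P x)) (hne : P x ≠ 0)
    (hHP : ∀ᶠ y in 𝓝 x, H y * P y = lam y • P y) (hPH : P x * H x = lam x • P x) :
    (fun y => lam y - lam x) =O[𝓝 x] fun y => H y - H x := by
  have hlim : Tendsto (fun y => P x * P y) (𝓝 x) (𝓝 (P x)) := by
    simpa only [hidem.eq] using hP.tendsto.const_mul (P x)
  have hone : (fun _ => (1 : 𝕜)) =O[𝓝 x] fun y => P x * P y :=
    (isBigO_const_const 1 hne _).trans ((isEquivalent_const_iff_tendsto hne).2 hlim).symm.isBigO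
  have hcompress : (fun y => P x * (H y - H x) * P y) =O[𝓝 x] fun y => H y - H x := by
    simpa using (((isBigO_refl (fun y => H y - H x) (𝓝 x)).const_mul_left (P x)).norm_right.mul
      (hP.tendsto.isBigO_one ℝ)).norm_right
  have heig : (fun y => P x * (H y - H x) * P y) =ᶠ[𝓝 x]
      fun y => (lam y - lam x) • (P x * P y) := by
    filter_upwards [hHP] with y hy
    rw [mul_sub, sub_mul, hPH, mul_assoc, hy, mul_smul_comm, smul_mul_assoc, sub_smul]
  calc (fun y => lam y - lam x)
      =O[𝓝 x] fun y => (lam y - lam x) • (P x * P y) := by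
        simpa using ((isBigO_refl (fun y => lam y - lam x) (𝓝 x)).smul hone)
    _ =ᶠ[𝓝 x] fun y => P x * (H y - H x) * P y := heig.symm
    _ =O[𝓝 x] fun y => H y - H x := hcompress

theorem hasFDerivAt_compl_mul {H P : E → R} {lam : E → 𝕜} {A : R} {H' : E →L[𝕜] R}
    (hH : HasFDerivAt H H' x) (hP : ContinuousAt P x)
    (hlam : (fun y => lam y - lam x) =O[𝓝 x] fun y => y - x)
    (hHP : ∀ᶠ y in 𝓝 x, H y * P y = lam y • P y) (hAT : A * (lam x • 1 - H x) = 1 - P x)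
    (hAP : A * P x = 0) :
    HasFDerivAt (fun y => (1 - P x) * P y)
      ((ContinuousLinearMap.mulLeftRight 𝕜 R A (P x)).comp H') x := by
  refine hasFDerivAt_of_sub_isLittleO
    ((ContinuousLinearMap.mulLeftRight 𝕜 R A (P x)).hasFDerivAt.comp x hH) ?_
  have hT : (fun y => A * ((lam y - lam x) • 1 - (H y - H x))) =O[𝓝 x] fun y => y - x :=
    ((ContinuousLinearMap.mul 𝕜 R A).isBigO_comp _ _).trans
      ((((ContinuousLinearMap.toSpanSingleton 𝕜 (1 : R)).isBigO_comp _ _).trans hlam).sub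
        hH.isBigO_sub)
  have hcont : (fun y => P y - P x) =o[𝓝 x] fun _ => (1 : ℝ) :=
    (isLittleO_one_iff ℝ).2 (tendsto_sub_nhds_zero_iff.2 hP)
  have hrem : (fun y => A * ((lam y - lam x) • 1 - (H y - H x)) * (P y - P x)) =o[𝓝 x]
      fun y => y - x := by
    simpa using (hT.norm_right.mul_isLittleO hcont).norm_right
  refine hrem.congr' (hHP.mono fun y hy => ?_) .rfl
  have hcompl : (1 - P x) * P y = A * (H y - H x) * P y - (lam y - lam x) • (A * P y) := by
    rw [← hAT, mul_assoc, mul_assoc, sub_mul, sub_mul, hy, smul_mul_assoc, one_mul, ← mul_smul_comm,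
      ← mul_sub, sub_smul]
    congr 1
    abel
  have hzero : (1 - P x) * P x = 0 := by
    rw [← hAT, mul_assoc, sub_mul, hHP.self_of_nhds, smul_mul_assoc, one_mul, sub_self, mul_zero]
  simp only [Function.comp_apply, ContinuousLinearMap.mulLeftRight_apply, hzero, hcompl, mul_sub,
    sub_mul, mul_smul_comm, smul_mul_assoc, mul_one, hAP, smul_zero]
  abel

theorem hasFDerivAt_mul_compl {H P : E → R} {lam : E → 𝕜} {A : R} {H' : E →L[𝕜] R}
    (hH : HasFDerivAt H H' x) (hP : ContinuousAt P x)
    (hlam : (fun y => lam y - lam x) =O[𝓝 x] fun y => y - x)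
    (hPH : ∀ᶠ y in 𝓝 x, P y * H y = lam y • P y) (hTA : (lam x • 1 - H x) * A = 1 - P x)
    (hPA : P x * A = 0) :
    HasFDerivAt (fun y => P y * (1 - P x))
      ((ContinuousLinearMap.mulLeftRight 𝕜 R (P x) A).comp H') x := by
  let op := MulOpposite.opContinuousLinearEquiv 𝕜 (M := R)
  have hop : HasFDerivAt (fun y => (1 - op (P x)) * op (P y)) _ x :=
    hasFDerivAt_compl_mul (A := op A) (op.hasFDerivAt.comp x hH)
      (op.continuous.continuousAt.comp hP) hlam
      (hPH.mono fun y hy => congrArg MulOpposite.op hy)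
      (congrArg MulOpposite.op hTA) (congrArg MulOpposite.op hPA)
  exact (op.symm.hasFDerivAt.comp x hop).congr_fderiv (by ext; simp [op, mul_assoc])

theorem hasFDerivAt_eigenprojection {H P : E → R} {lam : E → 𝕜} {A : R} {H' : E →L[𝕜] R}
    (hH : HasFDerivAt H H' x) (hP : ContinuousAt P x) (hne : P x ≠ 0)
    (hidem : ∀ᶠ y in 𝓝 x, IsIdempotentElem (P y))
    (hHP : ∀ᶠ y in 𝓝 x, H y * P y = lam y • P y) (hPH : ∀ᶠ y in 𝓝 x, P y * H y = lam y • P y)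
    (hA : IsReducedResolvent A (lam x • 1 - H x) (P x)) :
    HasFDerivAt P ((ContinuousLinearMap.mulLeftRight 𝕜 R (P x) A +
      ContinuousLinearMap.mulLeftRight 𝕜 R A (P x)).comp H') x := by
  have hx : IsIdempotentElem (P x) := hidem.self_of_nhds
  have hlam : (fun y => lam y - lam x) =O[𝓝 x] fun y => y - x :=
    (eigenvalue_sub_isBigO hP hx hne hHP hPH.self_of_nhds).trans hH.isBigO_sub
  convert hasFDerivAt_of_isIdempotentElem hP hidem
    (hasFDerivAt_compl_mul hH hP hlam hHP hA.mul_operator hA.mul_proj)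
    (hasFDerivAt_mul_compl hH hP hlam hPH hA.operator_mul hA.proj_mul) using 1
  ext e
  simp only [ContinuousLinearMap.comp_apply, _root_.add_apply,
    ContinuousLinearMap.mulLeftRight_apply, ContinuousLinearMap.mul_apply', ← mul_assoc, hx.eq]
  exact add_comm _ _

end Derivatives

theorem card_filter_eq_ne_zero {ι α : Type*} [Fintype ι] [DecidableEq α] (f : ι → α) (i : ι) :
    (Finset.univ.filter fun k => f k = f i).card ≠ 0 :=
  Finset.card_ne_zero_of_mem (Finset.mem_filter.2 ⟨Finset.mem_univ i, rfl⟩)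

/-- `lam` lists the eigenvalues of the real symmetric matrix `H` with multiplicity, and `P i` is the
orthogonal projection onto the eigenspace of `lam i`. A `d`-fold eigenvalue occurs `d` times in the
list, hence the weights `1 / d` in the resolution of the identity `sum_eq_one`. -/
structure IsSpectralDecomposition {ι n : Type*} [Fintype ι] [Fintype n] [DecidableEq n]
    (H : Matrix n n ℝ) (lam : ι → ℝ) (P : ι → Matrix n n ℝ) : Prop where
  isSymm : H.IsSymm
  proj_isSymm (i : ι) : (P i).IsSymm
  proj_isIdempotentElem (i : ι) : IsIdempotentElem (P i)
  mul_proj (i : ι) : H * P i = lam i • P i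
  trace_proj (i : ι) : (P i).trace = ((Finset.univ.filter fun k => lam k = lam i).card : ℝ)
  proj_congr (i k : ι) : lam i = lam k → P i = P k
  sum_eq_one : ∑ i, ((Finset.univ.filter fun k => lam k = lam i).card : ℝ)⁻¹ • P i = 1

namespace IsSpectralDecomposition

variable {ι n : Type*} [Fintype ι] [Fintype n] [DecidableEq n]
  {H : Matrix n n ℝ} {lam : ι → ℝ} {P : ι → Matrix n n ℝ}

theorem proj_mul (h : IsSpectralDecomposition H lam P) (i : ι) :
    P i * H = lam i • P i := by
  simpa only [Matrix.transpose_mul, Matrix.transpose_smul, (h.proj_isSymm i).eq, h.isSymm.eq]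
    using congrArg Matrix.transpose (h.mul_proj i)

theorem proj_mul_proj_of_ne (h : IsSpectralDecomposition H lam P) {i k : ι} (hik : lam i ≠ lam k) :
    P i * P k = 0 := by
  have heig : lam i • (P i * P k) = lam k • (P i * P k) := by
    rw [← smul_mul_assoc, ← h.proj_mul, mul_assoc, h.mul_proj, mul_smul_comm]
  rw [← sub_eq_zero, ← sub_smul] at heig
  exact (smul_eq_zero.1 heig).resolve_left (sub_ne_zero.2 hik)

theorem proj_ne_zero (h : IsSpectralDecomposition H lam P) (i : ι) : P i ≠ 0 := by
  intro hzero
  have htrace := h.trace_proj i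
  rw [hzero, Matrix.trace_zero] at htrace
  exact Nat.cast_ne_zero.2 (card_filter_eq_ne_zero lam i) htrace.symm

theorem sum_filter_eq (h : IsSpectralDecomposition H lam P) (j : ι) :
    ∑ i with lam i = lam j,
      ((Finset.univ.filter fun k => lam k = lam i).card : ℝ)⁻¹ • P i = P j := by
  have hconst : ∀ i ∈ Finset.univ.filter (fun i => lam i = lam j),
      ((Finset.univ.filter fun k => lam k = lam i).card : ℝ)⁻¹ • P i =
        ((Finset.univ.filter fun k => lam k = lam j).card : ℝ)⁻¹ • P j := by
    intro i hi
    have hij : lam i = lam j := (Finset.mem_filter.1 hi).2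
    rw [h.proj_congr i j hij, hij]
  rw [Finset.sum_congr rfl hconst, Finset.sum_const, ← Nat.cast_smul_eq_nsmul ℝ, smul_smul,
    mul_inv_cancel₀ (Nat.cast_ne_zero.2 (card_filter_eq_ne_zero lam j)), one_smul]

theorem sum_filter_ne (h : IsSpectralDecomposition H lam P) (j : ι) :
    ∑ i with lam i ≠ lam j,
      ((Finset.univ.filter fun k => lam k = lam i).card : ℝ)⁻¹ • P i = 1 - P j := by
  rw [eq_sub_iff_add_eq', ← h.sum_eq_one, ← h.sum_filter_eq j]
  exact Finset.sum_filter_add_sum_filter_not _ _ _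

end IsSpectralDecomposition

theorem isReducedResolvent_Amat {E : Type*} {m : ℕ} {H : Matrix (Fin m) (Fin m) ℝ}
    {lam : Fin m → E → ℝ} {P : Fin m → E → Matrix (Fin m) (Fin m) ℝ} {x : E}
    (h : IsSpectralDecomposition H (lam · x) (P · x)) (j : Fin m) :
    IsReducedResolvent (Amat lam P j x) (lam j x • 1 - H) (P j x) := by
  have hweight (c : ℝ) {i : Fin m} (hi : i ∈ Finset.univ.filter fun i => lam i x ≠ lam j x) :
      (c * (lam j x - lam i x))⁻¹ * (lam j x - lam i x) = c⁻¹ := by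
    rw [mul_inv, inv_mul_cancel_right₀ (sub_ne_zero.2 (Finset.mem_filter.1 hi).2.symm)]
  constructor
  · rw [← h.sum_filter_ne j, Amat, Finset.sum_mul]
    refine Finset.sum_congr rfl fun i hi => ?_
    rw [smul_mul_assoc, mul_sub (P i x), h.proj_mul, mul_smul_comm, mul_one, ← sub_smul, smul_smul,
      hweight _ hi]
  · rw [← h.sum_filter_ne j, Amat, Finset.mul_sum]
    refine Finset.sum_congr rfl fun i hi => ?_
    rw [mul_smul_comm, sub_mul _ H, h.mul_proj, smul_mul_assoc, one_mul, ← sub_smul, smul_smul,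
      hweight _ hi]
  · rw [Amat, Finset.sum_mul]
    refine Finset.sum_eq_zero fun i hi => ?_
    rw [smul_mul_assoc, h.proj_mul_proj_of_ne (Finset.mem_filter.1 hi).2, smul_zero]
  · rw [Amat, Finset.mul_sum]
    refine Finset.sum_eq_zero fun i hi => ?_
    rw [mul_smul_comm, h.proj_mul_proj_of_ne (Finset.mem_filter.1 hi).2.symm, smul_zero]

section Matrices

attribute [local instance] Matrix.linftyOpNormedRing Matrix.linftyOpNormedAlgebra

variable {E : Type*} [NormedAddCommGroup E] [NormedSpace ℝ E] {m : ℕ}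

theorem exists_hasFDerivAt_DH {H : E → Matrix (Fin m) (Fin m) ℝ} {x : E}
    (hH : ∀ i k, DifferentiableAt ℝ (fun y => H y i k) x) :
    ∃ H' : E →L[ℝ] Matrix (Fin m) (Fin m) ℝ, HasFDerivAt H H' x ∧ ∀ e, H' e = DH H x e :=
  ⟨.pi fun i => .pi fun k => fderiv ℝ (fun y => H y i k) x,
    hasFDerivAt_pi.2 fun i => hasFDerivAt_pi.2 fun k => (hH i k).hasFDerivAt, fun _ => rfl⟩

theorem exists_hasFDerivAt_spectralProjection {H : E → Matrix (Fin m) (Fin m) ℝ}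
    {lam : Fin m → E → ℝ} {P : Fin m → E → Matrix (Fin m) (Fin m) ℝ} {j : Fin m} {x : E}
    (hH : ∀ i k, DifferentiableAt ℝ (fun y => H y i k) x)
    (hP : ∀ i k, ContinuousAt (fun y => P j y i k) x)
    (hspec : ∀ᶠ y in 𝓝 x, IsSpectralDecomposition (H y) (lam · y) (P · y)) :
    ∃ P' : E →L[ℝ] Matrix (Fin m) (Fin m) ℝ, HasFDerivAt (P j) P' x ∧
      ∀ e, P' e = P j x * DH H x e * Amat lam P j x + Amat lam P j x * DH H x e * P j x := by
  obtain ⟨H', hH', hDH⟩ := exists_hasFDerivAt_DH hH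
  have hPx : ContinuousAt (P j) x := continuousAt_pi.2 fun i => continuousAt_pi.2 (hP i)
  refine ⟨_, hasFDerivAt_eigenprojection hH' hPx (hspec.self_of_nhds.proj_ne_zero j)
    (hspec.mono fun y hy => hy.proj_isIdempotentElem j) (hspec.mono fun y hy => hy.mul_proj j)
    (hspec.mono fun y hy => hy.proj_mul j) (isReducedResolvent_Amat hspec.self_of_nhds j),
    fun e => ?_⟩
  rw [← hDH]
  rfl

theorem total_derivative_of_eigenprojections_general
    {H : E → Matrix (Fin m) (Fin m) ℝ} {lam : Fin m → E → ℝ}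
    {P : Fin m → E → Matrix (Fin m) (Fin m) ℝ} {j : Fin m} {x : E}
    (hH : ∀ i k, DifferentiableAt ℝ (fun y => H y i k) x)
    (hP : ∀ i k, ContinuousAt (fun y => P j y i k) x)
    (hspec : ∀ᶠ y in 𝓝 x, IsSpectralDecomposition (H y) (lam · y) (P · y)) :
    (∀ i k, DifferentiableAt ℝ (fun y => P j y i k) x) ∧
    (∀ (e : E) (i k : Fin m), HasDerivAt (fun h : ℝ => P j (x + h • e) i k)
      ((P j x * DH H x e * Amat lam P j x + Amat lam P j x * DH H x e * P j x) i k) 0) ∧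
    (∀ (q : Fin m → ℝ) (e : E), fderiv ℝ (fun y => (P j y).mulVec q) x e
      = (P j x).mulVec ((DH H x e).mulVec ((Amat lam P j x).mulVec q))
        + (Amat lam P j x).mulVec ((DH H x e).mulVec ((P j x).mulVec q))) := by
  obtain ⟨P', hP', hformula⟩ := exists_hasFDerivAt_spectralProjection hH hP hspec
  have hentry (i k : Fin m) := hasFDerivAt_pi'.1 (hasFDerivAt_pi'.1 hP' i) k
  refine ⟨fun i k => (hentry i k).differentiableAt, fun e i k => ?_, fun q e => ?_⟩
  · rw [← hformula e]
    exact (hentry i k).hasLineDerivAt e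
  · have hmulVec := ((Matrix.mulVecBilin ℝ ℝ).flip q).toContinuousLinearMap.hasFDerivAt.comp x hP'
    calc fderiv ℝ (fun y => (P j y).mulVec q) x e
        = (P' e).mulVec q := DFunLike.congr_fun hmulVec.fderiv e
      _ = _ := by simp only [hformula, Matrix.add_mulVec, Matrix.mulVec_mulVec, mul_assoc]

end Matrices

theorem total_derivative_of_eigenprojections {n m : ℕ}
    (Ω : Set (EuclideanSpace ℝ (Fin n))) (hΩo : IsOpen Ω) (hΩc : IsConnected Ω)
    (H : EuclideanSpace ℝ (Fin n) → Matrix (Fin m) (Fin m) ℝ)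
    (lam : Fin m → EuclideanSpace ℝ (Fin n) → ℝ)
    (P : Fin m → EuclideanSpace ℝ (Fin n) → Matrix (Fin m) (Fin m) ℝ)
    (hH : ∀ i k, ContDiffOn ℝ 1 (fun y => H y i k) Ω)
    (hsymm : ∀ x ∈ Ω, (H x).IsSymm)
    (hmono : ∀ x ∈ Ω, Monotone fun i => lam i x)
    (hPsymm : ∀ (j : Fin m) (x), x ∈ Ω → (P j x).IsSymm)
    (hPidem : ∀ (j : Fin m) (x), x ∈ Ω → P j x * P j x = P j x)
    (hHP : ∀ (j : Fin m) (x), x ∈ Ω → H x * P j x = lam j x • P j x)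
    (htr : ∀ (j : Fin m) (x), x ∈ Ω →
      (P j x).trace = ((Finset.univ.filter fun i => lam i x = lam j x).card : ℝ))
    (hPeq : ∀ (i j : Fin m) (x), x ∈ Ω → lam i x = lam j x → P i x = P j x)
    (hPorth : ∀ (i j : Fin m) (x), x ∈ Ω → lam i x ≠ lam j x → P i x * P j x = 0)
    (hcompl : ∀ x ∈ Ω,
      ∑ i, ((Finset.univ.filter fun k => lam k x = lam i x).card : ℝ)⁻¹ • P i x = 1)
    (j : Fin m)
    (hPcont : ∀ i k, ContinuousOn (fun y => P j y i k) Ω) :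
    ∀ x ∈ Ω,
      (∀ i k, DifferentiableAt ℝ (fun y => P j y i k) x) ∧
      (∀ (e : EuclideanSpace ℝ (Fin n)) (i k : Fin m),
        HasDerivAt (fun h : ℝ => P j (x + h • e) i k)
          ((P j x * DH H x e * Amat lam P j x + Amat lam P j x * DH H x e * P j x) i k) 0) ∧
      (∀ (q : Fin m → ℝ) (e : EuclideanSpace ℝ (Fin n)),
        fderiv ℝ (fun y => (P j y).mulVec q) x e
          = (P j x).mulVec ((DH H x e).mulVec ((Amat lam P j x).mulVec q))
            + (Amat lam P j x).mulVec ((DH H x e).mulVec ((P j x).mulVec q))) := by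
  intro x hx
  have hΩx : Ω ∈ 𝓝 x := hΩo.mem_nhds hx
  exact total_derivative_of_eigenprojections_general
    (fun i k => ((hH i k).contDiffAt hΩx).differentiableAt one_ne_zero)
    (fun i k => (hPcont i k).continuousAt hΩx)
    (eventually_of_mem hΩx fun y hy => ⟨hsymm y hy, (hPsymm · y hy),
      (hPidem · y hy), (hHP · y hy), (htr · y hy), (hPeq · · y hy), hcompl y hy⟩)
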